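/- Let 𝒢 = {G₁,…,G_g} be a partition of {1,…,n} into g disjoint nonempty subsets, let μ ∈ (0,1), and set γ := μ√g/(1−μ). Let x, x̂ ∈ ℝⁿ satisfy ‖x̂‖_{SGL,μ} ≤ ‖x‖_{SGL,μ}, set h := x̂ − x, and let S be an index set of k largest-magnitude components of x (so that ‖x_{Sᶜ}‖₁ = σ_k(x, ‖·‖₁)). Then (1−γ)‖h_{Sᶜ}‖₁ − (1+γ)‖h_S‖₁ ≤ 2σ_k(x, ‖·‖₁). -/

import Mathlib

/-- The ℓ¹-norm of a vector in ℝⁿ. -/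
noncomputable def l1 {n : ℕ} (x : Fin n → ℝ) : ℝ := ∑ i, |x i|

/-- The ℓ²-norm of a vector in ℝⁿ. -/
noncomputable def l2 {n : ℕ} (x : Fin n → ℝ) : ℝ := Real.sqrt (∑ i, (x i) ^ 2)

/-- The ℓᵖ-norm of a vector in ℝⁿ. -/
noncomputable def lpNorm {n : ℕ} (p : ℝ) (x : Fin n → ℝ) : ℝ := (∑ i, |x i| ^ p) ^ (1 / p)

/-- A vector is `k`-sparse if it has at most `k` nonzero components. -/
def IsSparse {n : ℕ} (k : ℕ) (x : Fin n → ℝ) : Prop :=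
  (Finset.univ.filter (fun i => x i ≠ 0)).card ≤ k

/-- The `k`-sparsity index of `x` with respect to the ℓ¹-norm. -/
noncomputable def sigma1 {n : ℕ} (k : ℕ) (x : Fin n → ℝ) : ℝ :=
  sInf ((fun z => l1 (x - z)) '' {z | IsSparse k z})

/-- The `k`-sparsity index of `x` with respect to the ℓ²-norm. -/
noncomputable def sigma2 {n : ℕ} (k : ℕ) (x : Fin n → ℝ) : ℝ :=
  sInf ((fun z => l2 (x - z)) '' {z | IsSparse k z})

/-- The vector agreeing with `x` on `S` and zero elsewhere. -/
def proj {n : ℕ} (S : Finset (Fin n)) (x : Fin n → ℝ) : Fin n → ℝ :=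
  fun i => if i ∈ S then x i else 0

/-- `G` is a partition of `{1,…,n}` into `g` disjoint nonempty subsets. -/
def IsPartition {n g : ℕ} (G : Fin g → Finset (Fin n)) : Prop :=
  (∀ i, (G i).Nonempty) ∧ (∀ i j, i ≠ j → Disjoint (G i) (G j)) ∧
    (∀ x : Fin n, ∃ i, x ∈ G i)

/-- The Sparse Group LASSO norm associated to the partition `G` with parameter `μ`. -/
noncomputable def sglNorm {n g : ℕ} (G : Fin g → Finset (Fin n)) (μ : ℝ) (z : Fin n → ℝ) : ℝ :=
  ∑ i, ((1 - μ) * l1 (proj (G i) z) + μ * l2 (proj (G i) z))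

/-- `A` satisfies the Restricted Isometry Property of order `k` with constant `δ`. -/
def RIP {m n : ℕ} (A : Matrix (Fin m) (Fin n) ℝ) (k : ℕ) (δ : ℝ) : Prop :=
  ∀ u : Fin n → ℝ, IsSparse k u →
    (1 - δ) * (l2 u) ^ 2 ≤ (l2 (A.mulVec u)) ^ 2 ∧
      (l2 (A.mulVec u)) ^ 2 ≤ (1 + δ) * (l2 u) ^ 2

/-- `A` satisfies the ℓ₂ robust null space property of order `k` with constants `ρ`, `τ`. -/
def RNSP {m n : ℕ} (A : Matrix (Fin m) (Fin n) ℝ) (k : ℕ) (ρ τ : ℝ) : Prop :=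
  ∀ h : Fin n → ℝ, ∀ S : Finset (Fin n), S.card ≤ k →
    l2 (proj S h) ≤ (ρ / Real.sqrt k) * l1 (proj Sᶜ h) +
      (τ / Real.sqrt k) * l2 (A.mulVec h)

/-!
Applied on `S` and on `Sᶜ`, the triangle inequality for `‖·‖₁` bounds
`‖h_{Sᶜ}‖₁ - ‖h_S‖₁` by `‖x̂‖₁ - ‖x‖₁ + 2 ‖x_{Sᶜ}‖₁`. Since the groups partition the coordinates,
the `ℓ¹` part of the SGL norm is `(1 - μ) ‖·‖₁`, so `‖x̂‖_{SGL} ≤ ‖x‖_{SGL}` says that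
`(1 - μ) (‖x̂‖₁ - ‖x‖₁)` is at most `μ` times the decrease of `∑ᵢ ‖·_{Gᵢ}‖₂`. Bounding each
`‖h_{Gᵢ}‖₂` by `‖h_{Gᵢ}‖₁` bounds that decrease by `‖h‖₁ = ‖h_S‖₁ + ‖h_{Sᶜ}‖₁`, with no factor
`√g`; the constant `μ / (1 - μ)` therefore suffices.
-/

section L1L2

variable {n : ℕ}

lemma l1_nonneg (x : Fin n → ℝ) : 0 ≤ l1 x :=
  Finset.sum_nonneg fun _ _ => abs_nonneg _

lemma l1_sub_le (x y : Fin n → ℝ) : l1 (x - y) ≤ l1 x + l1 y := by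
  simp only [l1, ← Finset.sum_add_distrib]
  exact Finset.sum_le_sum fun i _ => abs_sub (x i) (y i)

lemma l1_le_l1_add_l1_sub (x y : Fin n → ℝ) : l1 x ≤ l1 y + l1 (y - x) := by
  simpa using l1_sub_le y (y - x)

lemma l2_eq_norm_toLp (x : Fin n → ℝ) : l2 x = ‖WithLp.toLp 2 x‖ := by
  simp [l2, EuclideanSpace.norm_eq]

lemma l2_le_l2_add_l2_sub (x y : Fin n → ℝ) : l2 x ≤ l2 y + l2 (y - x) := by
  simpa only [l2_eq_norm_toLp, WithLp.toLp_sub] using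
    norm_le_norm_add_norm_sub (WithLp.toLp 2 y) (WithLp.toLp 2 x)

lemma l2_le_l1 (x : Fin n → ℝ) : l2 x ≤ l1 x := by
  refine Real.sqrt_le_iff.2 ⟨l1_nonneg x, ?_⟩
  simpa only [l1, sq_abs] using
    Finset.sum_sq_le_sq_sum_of_nonneg (s := Finset.univ) fun i _ => abs_nonneg (x i)

lemma proj_sub (S : Finset (Fin n)) (x y : Fin n → ℝ) :
    proj S (x - y) = proj S x - proj S y := by
  ext i
  by_cases hi : i ∈ S <;> simp [proj, hi]

lemma l1_proj (S : Finset (Fin n)) (x : Fin n → ℝ) : l1 (proj S x) = ∑ i ∈ S, |x i| := by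
  simp [l1, proj, apply_ite abs]

lemma l1_proj_add_l1_proj_compl (S : Finset (Fin n)) (x : Fin n → ℝ) :
    l1 (proj S x) + l1 (proj Sᶜ x) = l1 x := by
  rw [l1_proj, l1_proj, Finset.sum_add_sum_compl, l1]

lemma l1_proj_compl_sub_l1_proj_le (S : Finset (Fin n)) (x y : Fin n → ℝ) :
    l1 (proj Sᶜ (y - x)) - l1 (proj S (y - x)) ≤ l1 y - l1 x + 2 * l1 (proj Sᶜ x) := by
  have bound_off_S : l1 (proj Sᶜ (y - x)) ≤ l1 (proj Sᶜ y) + l1 (proj Sᶜ x) := by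
    simpa only [proj_sub] using l1_sub_le (proj Sᶜ y) (proj Sᶜ x)
  have bound_on_S : l1 (proj S x) ≤ l1 (proj S y) + l1 (proj S (y - x)) := by
    simpa only [proj_sub] using l1_le_l1_add_l1_sub (proj S x) (proj S y)
  linarith [l1_proj_add_l1_proj_compl S x, l1_proj_add_l1_proj_compl S y]

end L1L2

namespace IsPartition

variable {n g : ℕ} {G : Fin g → Finset (Fin n)}

lemma sum_l1_proj (hG : IsPartition G) (x : Fin n → ℝ) : ∑ i, l1 (proj (G i) x) = l1 x := by
  have cover : Finset.univ.biUnion G = Finset.univ := by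
    ext j
    simpa using hG.2.2 j
  simp only [l1_proj]
  rw [← Finset.sum_biUnion fun i _ j _ hij => hG.2.1 i j hij, cover, l1]

lemma sglNorm_eq (hG : IsPartition G) (μ : ℝ) (x : Fin n → ℝ) :
    sglNorm G μ x = (1 - μ) * l1 x + μ * ∑ i, l2 (proj (G i) x) := by
  rw [sglNorm, Finset.sum_add_distrib, ← Finset.mul_sum, ← Finset.mul_sum, hG.sum_l1_proj]

lemma sum_l2_proj_le_add_l1_sub (hG : IsPartition G) (x y : Fin n → ℝ) :
    ∑ i, l2 (proj (G i) x) ≤ ∑ i, l2 (proj (G i) y) + l1 (y - x) := by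
  rw [← hG.sum_l1_proj (y - x), ← Finset.sum_add_distrib]
  refine Finset.sum_le_sum fun i _ => ?_
  calc l2 (proj (G i) x)
      ≤ l2 (proj (G i) y) + l2 (proj (G i) (y - x)) := by
        simpa only [proj_sub] using l2_le_l2_add_l2_sub (proj (G i) x) (proj (G i) y)
    _ ≤ l2 (proj (G i) y) + l1 (proj (G i) (y - x)) := by
        gcongr
        exact l2_le_l1 _

lemma one_sub_mul_l1_sub_le (hG : IsPartition G) {μ : ℝ} (hμ : 0 ≤ μ) {x y : Fin n → ℝ}
    (hle : sglNorm G μ y ≤ sglNorm G μ x) : (1 - μ) * (l1 y - l1 x) ≤ μ * l1 (y - x) := by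
  have group_part := mul_le_mul_of_nonneg_left (hG.sum_l2_proj_le_add_l1_sub x y) hμ
  rw [hG.sglNorm_eq, hG.sglNorm_eq] at hle
  linarith

lemma one_le_sqrt_of_nonempty [Nonempty (Fin n)] (hG : IsPartition G) : 1 ≤ √(g : ℝ) := by
  obtain ⟨i, _⟩ := hG.2.2 (Classical.arbitrary (Fin n))
  exact Real.one_le_sqrt.2 (Nat.one_le_cast.2 i.pos)

end IsPartition

theorem stmt12_general {n g : ℕ} {G : Fin g → Finset (Fin n)} (hG : IsPartition G)
    {μ γ : ℝ} (hμ : μ ∈ Set.Ico (0 : ℝ) 1) (hγ : μ / (1 - μ) ≤ γ)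
    {x xh : Fin n → ℝ} (hle : sglNorm G μ xh ≤ sglNorm G μ x) (S : Finset (Fin n)) :
    (1 - γ) * l1 (proj Sᶜ (xh - x)) - (1 + γ) * l1 (proj S (xh - x)) ≤
      2 * l1 (proj Sᶜ x) := by
  have l1_growth : l1 xh - l1 x ≤ γ * l1 (xh - x) :=
    calc l1 xh - l1 x
        ≤ μ * l1 (xh - x) / (1 - μ) := by
          rw [le_div_iff₀' (sub_pos.2 hμ.2)]
          exact hG.one_sub_mul_l1_sub_le hμ.1 hle
      _ = μ / (1 - μ) * l1 (xh - x) := mul_div_right_comm _ _ _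
      _ ≤ γ * l1 (xh - x) := mul_le_mul_of_nonneg_right hγ (l1_nonneg _)
  rw [← l1_proj_add_l1_proj_compl S (xh - x)] at l1_growth
  linarith [l1_proj_compl_sub_l1_proj_le S x xh]

/-- Cone condition derived from SGL-norm minimality. -/
theorem stmt12 (n g k : ℕ) (G : Fin g → Finset (Fin n)) (hG : IsPartition G)
    (μ : ℝ) (hμ : μ ∈ Set.Ioo (0 : ℝ) 1)
    (γ : ℝ) (hγ : γ = μ * Real.sqrt g / (1 - μ))
    (x xh : Fin n → ℝ) (hle : sglNorm G μ xh ≤ sglNorm G μ x)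
    (h : Fin n → ℝ) (hh : h = xh - x)
    (S : Finset (Fin n)) (hScard : S.card ≤ k)
    (hS : l1 (proj Sᶜ x) = sigma1 k x) :
    (1 - γ) * l1 (proj Sᶜ h) - (1 + γ) * l1 (proj S h) ≤ 2 * sigma1 k x := by
  subst hγ hh
  rw [← hS]
  rcases isEmpty_or_nonempty (Fin n) with _ | _
  · simp [l1]
  · refine stmt12_general hG ⟨hμ.1.le, hμ.2⟩ ?_ hle S
    exact div_le_div_of_nonneg_right
      (le_mul_of_one_le_right hμ.1.le hG.one_le_sqrt_of_nonempty) (sub_pos.2 hμ.2).le
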